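/- arXiv:2103.00618 — 6 statements merged into one kernel-verified Lean document; each statement's English description precedes it below -/
import Mathlib

section
/- Let U be a unicyclic graph, let e be an edge of Cycles(U), and let a, b, c, d be four distinct vertices with ab, cd ∈ E(Forest(U)) and ac, bd ∉ E(U − e), so that τ = (a b / c d) is a nontrivial 2-switch on U − e. If τ(U − e) := (U − e) − ab − cd + ac + bd is a tree, then e is not an edge of τ(U − e). -/
/-!
The cycle `C` of `U` avoids `ab` and `cd`, since these are edges of `Forest(U)`.
Hence every edge of `C` other than `e` survives in `τ(U − e)`. If `e` were also an edge of
`τ(U − e)`, all of `C` would be contained in this tree. That is impossible: `C` would itself be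
a nontrivial tree, which has a vertex of degree one, while `C` is 2-regular.
-/

open SimpleGraph

variable {V : Type*}

/-- The 2-switch (a b / c d): delete the edges ab, cd and add the edges ac, bd. -/
def twoSwitch (G : SimpleGraph V) (a b c d : V) : SimpleGraph V :=
  (G.deleteEdges {s(a, b), s(c, d)}) ⊔ SimpleGraph.fromEdgeSet {s(a, c), s(b, d)}

/-- τ = (a b / c d) is a nontrivial 2-switch on `G`: the four vertices are distinct,
`ab, cd ∈ E(G)` and `ac, bd ∉ E(G)`. -/
def IsNontrivialSwitch (G : SimpleGraph V) (a b c d : V) : Prop :=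
  [a, b, c, d].Nodup ∧ G.Adj a b ∧ G.Adj c d ∧ ¬ G.Adj a c ∧ ¬ G.Adj b d

/-- A cycle subgraph: a subgraph isomorphic to a cycle graph, i.e. a subgraph that is
connected and 2-regular (every vertex of the subgraph has exactly two neighbours in it). -/
def IsCycleSubgraph (G : SimpleGraph V) (H : G.Subgraph) : Prop :=
  H.coe.Connected ∧ ∀ v ∈ H.verts, (H.neighborSet v).ncard = 2

/-- A graph is unicyclic if it is connected and contains exactly one cycle subgraph. -/
def Unicyclic (G : SimpleGraph V) : Prop :=
  G.Connected ∧ ∃! H : G.Subgraph, IsCycleSubgraph G H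

/-- `Cycles(G)`: the subgraph formed by all vertices and edges of `G` lying on some cycle. -/
def cyclesSub (G : SimpleGraph V) : G.Subgraph :=
  sSup {H | IsCycleSubgraph G H}

/-- `Forest(G) := G − E(Cycles(G))`. -/
def forestPart (G : SimpleGraph V) : SimpleGraph V :=
  G.deleteEdges (cyclesSub G).edgeSet

/-- A pseudoforest: every connected component contains at most one cycle subgraph, i.e. any
two cycle subgraphs lying in the same connected component coincide. -/
def Pseudoforest (G : SimpleGraph V) : Prop :=
  ∀ H₁ H₂ : G.Subgraph, IsCycleSubgraph G H₁ → IsCycleSubgraph G H₂ →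
    (∃ u ∈ H₁.verts, ∃ v ∈ H₂.verts, G.Reachable u v) → H₁ = H₂

/-- `cycles(G)`: the number of cycle subgraphs of `G`. -/
noncomputable def numCycles (G : SimpleGraph V) : ℕ :=
  {H : G.Subgraph | IsCycleSubgraph G H}.ncard

/-- `κ(G)`: the number of connected components of `G`. -/
noncomputable def numComponents (G : SimpleGraph V) : ℕ :=
  Nat.card G.ConnectedComponent

/-- `G'` is obtained from `G` by a nontrivial 2-switch. -/
def SwitchStep (G G' : SimpleGraph V) : Prop :=
  ∃ a b c d : V, IsNontrivialSwitch G a b c d ∧ G' = twoSwitch G a b c d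

/-- A cycle graph: a connected 2-regular graph. -/
def IsCycleGraph (G : SimpleGraph V) : Prop :=
  G.Connected ∧ ∀ v : V, (G.neighborSet v).ncard = 2

/-- `ℓ` is a leaf shared by `G` and `H`: it has degree one in both and its unique incident
edge is common to both graphs. -/
def SharedLeaf (G H : SimpleGraph V) : Prop :=
  ∃ ℓ v : V, (G.neighborSet ℓ).ncard = 1 ∧ (H.neighborSet ℓ).ncard = 1 ∧
    G.Adj ℓ v ∧ H.Adj ℓ v

/-- A finite acyclic graph contains no cycle subgraph, where the cycle is given as a subgraph of
a possibly different graph `U`: as a connected subgraph it would be a nontrivial tree, and a leaf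
of that tree contradicts 2-regularity. -/
theorem not_isAcyclic_of_cycleSubgraph_le {V : Type*} [Finite V] {U G : SimpleGraph V}
    (H : U.Subgraph) (hH : IsCycleSubgraph U H) (hle : ∀ x y, H.Adj x y → G.Adj x y) :
    ¬ G.IsAcyclic := by
  classical
  intro hG
  have := Fintype.ofFinite V
  have := Fintype.ofFinite H.verts
  obtain ⟨hconn, hdeg⟩ := hH
  let f : H.coe →g G := ⟨fun v => v.1, fun {x y} h => hle _ _ h⟩
  have htree : H.coe.IsTree := ⟨hconn, hG.comap f Subtype.val_injective⟩
  obtain ⟨v⟩ := hconn.nonempty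
  have hnontriv : Nontrivial H.verts := by
    have h2 : (H.neighborSet v).Nonempty := by
      apply Set.nonempty_of_ncard_ne_zero
      rw [hdeg v v.2]
      decide
    obtain ⟨w, hw⟩ := h2
    exact ⟨v, ⟨w, H.edge_vert hw.symm⟩, fun h => hw.ne (congrArg Subtype.val h)⟩
  obtain ⟨u, hu⟩ := htree.exists_vert_degree_one_of_nontrivial
  have h2 := hdeg u u.2
  rw [Subgraph.coe_degree, Subgraph.degree, ← Nat.card_eq_fintype_card, Nat.card_coe_set_eq] at hu
  omega

/-- if τ = (a b / c d) is a nontrivial 2-switch on U − e between two edges of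
Forest(U), where e is an edge of Cycles(U), and τ(U − e) is a tree, then e ∉ E(τ(U − e)). -/
theorem stmt0 {V : Type*} [Fintype V] (U : SimpleGraph V) (hU : Unicyclic U)
    (e : Sym2 V) (he : e ∈ (cyclesSub U).edgeSet)
    (a b c d : V) (hdist : [a, b, c, d].Nodup)
    (hab : (forestPart U).Adj a b) (hcd : (forestPart U).Adj c d)
    (hac : ¬ (U.deleteEdges {e}).Adj a c) (hbd : ¬ (U.deleteEdges {e}).Adj b d)
    (htree : (twoSwitch (U.deleteEdges {e}) a b c d).IsTree) :
    e ∉ (twoSwitch (U.deleteEdges {e}) a b c d).edgeSet := by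
  intro heT
  obtain ⟨H, hH, -⟩ := hU.2
  refine not_isAcyclic_of_cycleSubgraph_le H hH ?_ htree.2
  intro x y hxy
  by_cases hxe : s(x, y) = e
  · rwa [← mem_edgeSet, hxe]
  have hcyc : s(x, y) ∈ (cyclesSub U).edgeSet :=
    Subgraph.edgeSet_mono (le_sSup hH) hxy
  rw [forestPart, deleteEdges_adj] at hab hcd
  refine Or.inl ?_
  rw [deleteEdges_adj, deleteEdges_adj]
  refine ⟨⟨H.adj_sub hxy, hxe⟩, ?_⟩
  rintro (h | h)
  · exact hab.2 (h ▸ hcyc)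
  · exact hcd.2 (h ▸ hcyc)
end

section
/- Let U be a unicyclic graph and let a, b, c, d be four distinct vertices with ab ∈ E(Cycles(U)), cd ∈ E(Forest(U)), and ac, bd ∉ E(U), so that τ = (a b / c d) is a nontrivial 2-switch on U. Then there exists an edge e of Cycles(U) with e ≠ ab such that e is not an edge of τ(U − e) := (U − e) − ab − cd + ac + bd. -/
/-!
The edge `ab` lies on some cycle subgraph, in which `a` has exactly two neighbours, so there is a
cycle edge `e = aw` with `w ≠ b`. It is absent from `U - e`, and the switch does not add it back,
since `e` is an edge of `U` while `ac` and `bd` are not.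
-/

open SimpleGraph

variable {V : Type*}

/-- if τ = (a b / c d) is a nontrivial 2-switch on a unicyclic graph U with
ab ∈ E(Cycles(U)) and cd ∈ E(Forest(U)), then there is an edge e ≠ ab of Cycles(U) with
e ∉ E(τ(U − e)). -/
theorem stmt1 {V : Type*} [Fintype V] (U : SimpleGraph V) (hU : Unicyclic U)
    (a b c d : V) (hdist : [a, b, c, d].Nodup)
    (hab : (cyclesSub U).Adj a b) (hcd : (forestPart U).Adj c d)
    (hac : ¬ U.Adj a c) (hbd : ¬ U.Adj b d) :
    ∃ e ∈ (cyclesSub U).edgeSet, e ≠ s(a, b) ∧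
      e ∉ (twoSwitch (U.deleteEdges {e}) a b c d).edgeSet := by
  rw [cyclesSub, Subgraph.sSup_adj] at hab
  obtain ⟨H, hH, hHab⟩ := hab
  -- `a` has a second neighbour `w` on the cycle; take `e = aw`.
  obtain ⟨w, hw, hwb⟩ : ∃ w ∈ H.neighborSet a, w ≠ b :=
    Set.exists_ne_of_one_lt_ncard (by rw [hH.2 a hHab.fst_mem]; norm_num) b
  have hHaw : H.Adj a w := hw
  have hUaw : U.Adj a w := hHaw.adj_sub
  refine ⟨s(a, w), ?_, ?_, ?_⟩
  · rw [Subgraph.mem_edgeSet, cyclesSub, Subgraph.sSup_adj]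
    exact ⟨H, hH, hHaw⟩
  · exact fun h => hwb (Sym2.congr_right.mp h)
  · -- `aw` is deleted, and it is neither added edge because `ac` and `bd` are not edges of `U`.
    have h1 : s(a, w) ≠ s(a, c) := fun h => by
      rw [← mem_edgeSet, ← h] at hac
      exact hac hUaw
    have h2 : s(a, w) ≠ s(b, d) := fun h => by
      rw [← mem_edgeSet, ← h] at hbd
      exact hbd hUaw
    rw [twoSwitch, mem_edgeSet, sup_adj, deleteEdges_adj, deleteEdges_adj, fromEdgeSet_adj]
    rintro (⟨⟨-, h⟩, -⟩ | ⟨h | h, -⟩)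
    · exact h rfl
    · exact h1 h
    · exact h2 h
end

section
/- Let U be a unicyclic graph, let a, b, c, d be four distinct vertices with ab, cd ∈ E(Forest(U)) and ac, bd ∉ E(U), so that τ = (a b / c d) is a nontrivial 2-switch on U, and let e be any edge of Cycles(U). Then τ(U) is unicyclic if and only if τ(U − e) := (U − e) − ab − cd + ac + bd is a tree. -/
/-!
The proof rests on a description of unicyclic graphs by edge deletion: if `C` is a cycle subgraph
of a finite graph `G` and `e` is an edge of `C`, then `G` is unicyclic if and only if `G - e` is
a tree (`unicyclic_iff_isTree_deleteEdges`).

* If `G` is unicyclic, `e` is not a bridge because it lies on `C`, so `G - e` is connected. A cycle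
  of `G - e` would be a cycle of `G` avoiding `e`, hence different from `C`.
* If `G - e` is a tree, every cycle of `G` contains `e`. Suppose an edge `f = xy` lies on a cycle
  `H₁` but not on a cycle `H₂`. Then `x` and `y` are joined by `H₁ - f`, and a use of `e` there can
  be rerouted along `H₂ - e`; so `f` is not a bridge of the tree `G - e`, a contradiction. Thus all
  cycles of `G` have the same edges.

Now let `C` be a cycle of `U` through `e`. The switch only deletes forest edges, so `C` is still a
cycle of `τ(U)`; moreover `τ(U - e) = τ(U) - e`. The theorem is the description above applied to
`τ(U)`, `C` and `e`. No edge counting is needed.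
-/

open SimpleGraph

variable {V : Type*}

/-- A cycle subgraph of `G` all of whose edges belong to `G'` is a cycle subgraph of `G'`. -/
lemma IsCycleSubgraph.transfer {G G' : SimpleGraph V} {H : G.Subgraph}
    (hH : IsCycleSubgraph G H) (hle : H.spanningCoe ≤ G') :
    ∃ H' : G'.Subgraph, IsCycleSubgraph G' H' ∧ H'.Adj = H.Adj :=
  ⟨⟨H.verts, H.Adj, fun h => hle h, fun h => H.edge_vert h, H.symm⟩, hH, rfl⟩

lemma IsCycleSubgraph.exists_adj {G : SimpleGraph V} {H : G.Subgraph}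
    (hH : IsCycleSubgraph G H) {v : V} (hv : v ∈ H.verts) : ∃ w, H.Adj v w := by
  have h2 := hH.2 v hv
  exact Set.nonempty_of_ncard_ne_zero (s := H.neighborSet v) (by omega)

lemma IsCycleSubgraph.isCycles {G : SimpleGraph V} {H : G.Subgraph}
    (hH : IsCycleSubgraph G H) : H.spanningCoe.IsCycles := by
  rintro v ⟨w, hw⟩
  exact hH.2 v (H.edge_vert hw)

/-- Deleting an edge of a cycle leaves its endpoints joined by the rest of the cycle. -/
lemma IsCycleSubgraph.reachable [Finite V] {G : SimpleGraph V} {H : G.Subgraph}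
    (hH : IsCycleSubgraph G H) {u v : V} (huv : H.Adj u v) :
    (H.spanningCoe.deleteEdges {s(u, v)}).Reachable u v := by
  have h := hH.isCycles.reachable_deleteEdges (v := u) (w := v) huv
  exact h

lemma IsCycleSubgraph.not_isAcyclic [Finite V] {G : SimpleGraph V} {H : G.Subgraph}
    (hH : IsCycleSubgraph G H) : ¬ H.spanningCoe.IsAcyclic := by
  intro hac
  obtain ⟨v, hv⟩ := hH.1.nonempty
  obtain ⟨w, hw⟩ := hH.exists_adj hv
  exact isBridge_iff.1 (isAcyclic_iff_forall_adj_isBridge.1 hac (show H.spanningCoe.Adj v w from hw))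
    (hH.reachable hw)

lemma isCycleSubgraph_toSubgraph {G : SimpleGraph V} {u : V} {p : G.Walk u u}
    (hp : p.IsCycle) : IsCycleSubgraph G p.toSubgraph :=
  ⟨p.toSubgraph_connected.coe, fun v hv =>
    hp.ncard_neighborSet_toSubgraph_eq_two (p.mem_verts_toSubgraph.1 hv)⟩

/-- Reachability survives when each edge is replaced by a detour in another graph. -/
lemma reachable_of_forall_adj_reachable {K K' : SimpleGraph V}
    (h : ∀ u v, K.Adj u v → K'.Reachable u v) {x y : V} (hxy : K.Reachable x y) :
    K'.Reachable x y := by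
  obtain ⟨p⟩ := hxy
  induction p with
  | nil => exact .refl _
  | cons hadj _ ih => exact (h _ _ hadj).trans ih

/-- If `G - e` is acyclic, then every cycle of `G` passes through `e`. -/
lemma IsCycleSubgraph.mem_edgeSet_of_isAcyclic [Finite V] {G : SimpleGraph V} {H : G.Subgraph}
    (hH : IsCycleSubgraph G H) {e : Sym2 V} (hac : (G.deleteEdges {e}).IsAcyclic) :
    e ∈ H.edgeSet := by
  by_contra he
  refine hH.not_isAcyclic (hac.anti fun u v huv => ?_)
  rw [deleteEdges_adj]
  refine ⟨H.adj_sub huv, ?_⟩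
  rintro rfl
  exact he huv

/-- If `G - e` is acyclic, then all cycles of `G` have the same edges; stated as an inclusion. -/
lemma IsCycleSubgraph.adj_of_adj [Finite V] {G : SimpleGraph V} {H₁ H₂ : G.Subgraph}
    (h₁ : IsCycleSubgraph G H₁) (h₂ : IsCycleSubgraph G H₂) {e : Sym2 V}
    (hac : (G.deleteEdges {e}).IsAcyclic) {x y : V} (hxy : H₁.Adj x y) : H₂.Adj x y := by
  by_contra hf
  have he₂ := h₂.mem_edgeSet_of_isAcyclic hac
  have hfe : s(x, y) ≠ e := by
    rintro rfl
    exact hf he₂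
  have hadj : (G.deleteEdges {e}).Adj x y := by
    rw [deleteEdges_adj]
    exact ⟨H₁.adj_sub hxy, hfe⟩
  refine isBridge_iff.1 (isAcyclic_iff_forall_adj_isBridge.1 hac hadj)
    (reachable_of_forall_adj_reachable (fun u v huv => ?_) (h₁.reachable hxy))
  rw [deleteEdges_adj] at huv
  by_cases huve : s(u, v) = e
  · -- The step along `e` is rerouted through `H₂ - e`, which avoids `xy`.
    subst huve
    refine (h₂.reachable he₂).mono fun p q hpq => ?_
    rw [deleteEdges_adj] at hpq
    rw [deleteEdges_adj, deleteEdges_adj]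
    refine ⟨⟨H₂.adj_sub hpq.1, hpq.2⟩, fun hpqf => hf ?_⟩
    have : s(p, q) ∈ H₂.edgeSet := hpq.1
    rwa [Set.mem_singleton_iff.1 hpqf] at this
  · refine Adj.reachable ?_
    rw [deleteEdges_adj, deleteEdges_adj]
    exact ⟨⟨H₁.adj_sub huv.1, huve⟩, huv.2⟩

/-- A graph with a cycle through the edge `e` is unicyclic if and only if deleting `e` yields
a tree. -/
theorem unicyclic_iff_isTree_deleteEdges [Finite V] {G : SimpleGraph V} {C : G.Subgraph}
    (hC : IsCycleSubgraph G C) {e : Sym2 V} (he : e ∈ C.edgeSet) :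
    Unicyclic G ↔ (G.deleteEdges {e}).IsTree := by
  constructor
  · rintro ⟨hconn, hex⟩
    refine ⟨?_, ?_⟩
    · induction e with | _ u v
      refine hconn.connected_delete_edge_of_not_isBridge fun hb => isBridge_iff.1 hb ?_
      exact (hC.reachable he).mono (deleteEdges_mono C.spanningCoe_le)
    · intro u p hp
      obtain ⟨H, hH, hHadj⟩ := (isCycleSubgraph_toSubgraph hp).transfer
        ((Subgraph.spanningCoe_le _).trans (deleteEdges_le {e}))
      obtain rfl := hex.unique hC hH
      induction e with | _ x y
      have hxy : C.Adj x y := he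
      rw [hHadj] at hxy
      simpa using p.toSubgraph.adj_sub hxy
  · intro ht
    refine ⟨ht.connected.mono (deleteEdges_le _), C, hC, fun H hH => ?_⟩
    have hadj : ∀ x y, H.Adj x y ↔ C.Adj x y := fun x y =>
      ⟨hH.adj_of_adj hC ht.isAcyclic, hC.adj_of_adj hH ht.isAcyclic⟩
    -- A cycle subgraph has no isolated vertices, so its edges determine its vertices.
    ext x y
    · constructor
      · intro hx
        obtain ⟨w, hw⟩ := hH.exists_adj hx
        exact C.edge_vert ((hadj _ _).1 hw)
      · intro hx
        obtain ⟨w, hw⟩ := hC.exists_adj hx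
        exact H.edge_vert ((hadj _ _).2 hw)
    · exact hadj x y

lemma twoSwitch_deleteEdges {G : SimpleGraph V} {a b c d : V} {e : Sym2 V}
    (hac : e ≠ s(a, c)) (hbd : e ≠ s(b, d)) :
    twoSwitch (G.deleteEdges {e}) a b c d = (twoSwitch G a b c d).deleteEdges {e} := by
  ext x y
  simp only [twoSwitch, sup_adj, deleteEdges_adj, fromEdgeSet_adj, Set.mem_insert_iff,
    Set.mem_singleton_iff]
  grind

/-- for a nontrivial 2-switch τ on a unicyclic graph U between two edges of
Forest(U) and any edge e of Cycles(U): τ(U) is unicyclic iff τ(U − e) is a tree. -/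
theorem stmt2 {V : Type*} [Fintype V] (U : SimpleGraph V) (hU : Unicyclic U)
    (a b c d : V) (hdist : [a, b, c, d].Nodup)
    (hab : (forestPart U).Adj a b) (hcd : (forestPart U).Adj c d)
    (hac : ¬ U.Adj a c) (hbd : ¬ U.Adj b d)
    (e : Sym2 V) (he : e ∈ (cyclesSub U).edgeSet) :
    Unicyclic (twoSwitch U a b c d) ↔ (twoSwitch (U.deleteEdges {e}) a b c d).IsTree := by
  rw [cyclesSub, Subgraph.edgeSet_sSup] at he
  simp only [Set.mem_iUnion] at he
  obtain ⟨C, hC, heC⟩ := he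
  have heU : e ∈ U.edgeSet := C.edgeSet_subset heC
  have hforest : ∀ u v, (forestPart U).Adj u v → ¬ C.Adj u v := by
    intro u v huv hCuv
    rw [forestPart, deleteEdges_adj] at huv
    exact huv.2 ((le_sSup hC : C ≤ cyclesSub U).2 hCuv)
  rw [twoSwitch_deleteEdges (by rintro rfl; exact hac heU) (by rintro rfl; exact hbd heU)]
  obtain ⟨C', hC', hadj⟩ := IsCycleSubgraph.transfer (G' := twoSwitch U a b c d) hC (by
    intro u v huv
    have huvC : s(u, v) ∈ C.edgeSet := huv
    refine Or.inl (deleteEdges_adj.2 ⟨C.adj_sub huv, ?_⟩)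
    rintro (h | h)
    · rw [h] at huvC
      exact hforest a b hab huvC
    · rw [Set.mem_singleton_iff.1 h] at huvC
      exact hforest c d hcd huvC)
  refine unicyclic_iff_isTree_deleteEdges hC' ?_
  induction e with | _ x y
  rw [Subgraph.mem_edgeSet, hadj]
  exact heC
end

section
/- Let U be a unicyclic graph with a vertex ℓ of degree 1 and an edge ℓu ∈ E(U) such that u is not a vertex of Cycles(U). Then for every vertex v of Cycles(U) there exist four distinct vertices forming a nontrivial 2-switch τ on U such that τ(U) is unicyclic and ℓv ∈ E(τ(U)). -/
/-!
Choose a neighbour `w` of `v` on the cycle with `u` and `w` nonadjacent, and use the switch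
`(ℓ u / v w)`. Such a `w` exists: if `u` were adjacent to both cycle neighbours `w₁`, `w₂` of `v`,
then `u w₁ v w₂` would be a cycle through `u`, contrary to the choice of `u`.

The switch is a composition of three operations. Deleting the cycle edge `vw` leaves a spanning
tree (`Unicyclic.isTree_deleteEdges`). Moving the leaf `ℓ` from `u` to `v` leaves a tree
(`isTree_move_leaf`). Adding the new edge `uw` creates exactly one cycle
(`unicyclic_sup_edge`).

The uniqueness of the cycle created by an edge `e` is a parity argument
(`cycleSubgraph_unique`): a nonempty forest has a leaf, so a cycle subgraph avoiding `e` cannot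
lie in the tree, and the symmetric difference of two cycle subgraphs containing `e`, which lies in
the tree and has no vertex of degree one, must be empty.
-/

open SimpleGraph

variable {V : Type*}

theorem isAcyclic_eq_bot_of_no_leaf {V : Type*} [Finite V] {F : SimpleGraph V} (hF : F.IsAcyclic)
    (h : ∀ x y, F.Adj x y → ∃ z, z ≠ y ∧ F.Adj x z) : F = ⊥ := by
  classical
  have := Fintype.ofFinite V
  by_contra hne
  obtain ⟨a, b, hab⟩ := ne_bot_iff_exists_adj.mp hne
  have ht := hF.isTree_connectedComponent (F.connectedComponentMk a)
  have : Nontrivial (F.connectedComponentMk a) :=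
    ⟨⟨a, rfl⟩, ⟨b, ConnectedComponent.sound hab.reachable.symm⟩,
      fun h => hab.ne (congrArg Subtype.val h)⟩
  obtain ⟨⟨x, hx⟩, hd⟩ := ht.exists_vert_degree_one_of_nontrivial
  obtain ⟨⟨y, hy⟩, hxy, huniq⟩ := degree_eq_one_iff_existsUnique_adj.mp hd
  have hxy' : F.Adj x y := hxy
  obtain ⟨z, hzy, hxz⟩ := h x y hxy'
  have hz : z ∈ F.connectedComponentMk a :=
    (ConnectedComponent.sound hxz.reachable.symm).trans hx
  exact hzy (congrArg Subtype.val (huniq ⟨z, hz⟩ hxz))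

theorem IsCycleSubgraph.mem_verts_iff {V : Type*} {G : SimpleGraph V} {H : G.Subgraph}
    (hH : IsCycleSubgraph G H) {x : V} : x ∈ H.verts ↔ ∃ y, H.Adj x y := by
  refine ⟨fun hx => ?_, fun ⟨y, hy⟩ => H.edge_vert hy⟩
  have h2 := hH.2 x hx
  exact Set.nonempty_of_ncard_ne_zero (s := H.neighborSet x) (by omega)

theorem IsCycleSubgraph.exists_pair {V : Type*} {G : SimpleGraph V} {H : G.Subgraph}
    (hH : IsCycleSubgraph G H) {x y : V} (hxy : H.Adj x y) :
    ∃ z, z ≠ y ∧ ∀ t, H.Adj x t ↔ t = y ∨ t = z := by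
  obtain ⟨p, q, hpq, hN⟩ := Set.ncard_eq_two.mp (hH.2 x (H.edge_vert hxy))
  have hN' : ∀ t, H.Adj x t ↔ t = p ∨ t = q := fun t => by
    simpa using Set.ext_iff.mp hN t
  rcases (hN' y).mp hxy with rfl | rfl
  · exact ⟨q, hpq.symm, hN'⟩
  · exact ⟨p, hpq, fun t => by rw [hN', or_comm]⟩

theorem SimpleGraph.Walk.IsCycle.isCycleSubgraph {V : Type*} {G : SimpleGraph V} {x : V}
    {c : G.Walk x x} (hc : c.IsCycle) : IsCycleSubgraph G c.toSubgraph :=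
  ⟨(Subgraph.connected_iff'.mp c.toSubgraph_connected),
    fun _ hv => hc.ncard_neighborSet_toSubgraph_eq_two (c.mem_verts_toSubgraph.mp hv)⟩

theorem not_isCycleSubgraph_of_le_acyclic {V : Type*} [Finite V] {G T : SimpleGraph V}
    (hT : T.IsAcyclic) {H : G.Subgraph} (hH : IsCycleSubgraph G H) :
    ¬ H.spanningCoe ≤ T := by
  intro hle
  have hbot : H.spanningCoe = ⊥ := isAcyclic_eq_bot_of_no_leaf (hT.anti hle) fun x y hxy => by
    obtain ⟨z, hzy, hN⟩ := hH.exists_pair (x := x) (y := y) hxy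
    exact ⟨z, hzy, (hN z).mpr (Or.inr rfl)⟩
  obtain ⟨⟨x, hx⟩⟩ := hH.1.nonempty
  obtain ⟨y, hy⟩ := hH.mem_verts_iff.mp hx
  have : H.spanningCoe.Adj x y := hy
  simp [hbot] at this

/-- If all edges of `G` except possibly `e` lie in a forest, then `G` has at most one cycle
subgraph. -/
theorem cycleSubgraph_unique {V : Type*} [Finite V] {G T : SimpleGraph V} (hT : T.IsAcyclic)
    {e : Sym2 V} (hGT : ∀ x y, G.Adj x y → s(x, y) ≠ e → T.Adj x y) {H₁ H₂ : G.Subgraph}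
    (h₁ : IsCycleSubgraph G H₁) (h₂ : IsCycleSubgraph G H₂) : H₁ = H₂ := by
  have key : ∀ H : G.Subgraph, IsCycleSubgraph G H → ∀ x y, s(x, y) = e → H.Adj x y := by
    intro H hH x y hxy
    by_contra hn
    refine not_isCycleSubgraph_of_le_acyclic hT hH fun a b hab => ?_
    have hab' : H.Adj a b := hab
    refine hGT a b hab'.adj_sub fun he => hn ?_
    rw [← Subgraph.mem_edgeSet, hxy, ← he]
    exact hab'
  have hbot : symmDiff H₁.spanningCoe H₂.spanningCoe = ⊥ := by
    refine isAcyclic_eq_bot_of_no_leaf (hT.anti fun x y hxy => ?_) fun x y hxy => ?_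
    · simp only [symmDiff_def, sup_adj, sdiff_adj, Subgraph.spanningCoe_adj] at hxy
      have hG : G.Adj x y := by
        rcases hxy with h | h
        · exact h.1.adj_sub
        · exact h.1.adj_sub
      refine hGT x y hG fun he => ?_
      have := key H₁ h₁ x y he
      have := key H₂ h₂ x y he
      tauto
    · simp only [symmDiff_def, sup_adj, sdiff_adj, Subgraph.spanningCoe_adj] at hxy ⊢
      -- If the other neighbour `z` of `x` on the first cycle is cancelled by the second cycle,
      -- then the second neighbour of `x` on the second cycle survives.
      have aux : ∀ A B : G.Subgraph, IsCycleSubgraph G A → IsCycleSubgraph G B →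
          A.Adj x y → ¬ B.Adj x y →
          ∃ z, z ≠ y ∧ (A.Adj x z ∧ ¬ B.Adj x z ∨ B.Adj x z ∧ ¬ A.Adj x z) := by
        intro A B hA hB hAy hBy
        obtain ⟨z, hzy, hz⟩ := hA.exists_pair hAy
        by_cases hBz : B.Adj x z
        · obtain ⟨t, htz, ht⟩ := hB.exists_pair hBz
          have hBt : B.Adj x t := (ht t).mpr (Or.inr rfl)
          have hty : t ≠ y := fun h => hBy (h ▸ hBt)
          exact ⟨t, hty, Or.inr ⟨hBt, fun h => ((hz t).mp h).elim hty htz⟩⟩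
        · exact ⟨z, hzy, Or.inl ⟨(hz z).mpr (Or.inr rfl), hBz⟩⟩
      rcases hxy with h | h
      · exact aux H₁ H₂ h₁ h₂ h.1 h.2
      · obtain ⟨z, hz, hz'⟩ := aux H₂ H₁ h₂ h₁ h.1 h.2
        exact ⟨z, hz, hz'.symm⟩
  have hadj : ∀ x y, H₁.Adj x y ↔ H₂.Adj x y := fun x y => by
    have heq := symmDiff_eq_bot.mp hbot
    rw [← Subgraph.spanningCoe_adj, heq, Subgraph.spanningCoe_adj]
  refine Subgraph.ext (Set.ext fun x => ?_) (funext₂ fun x y => propext (hadj x y))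
  rw [h₁.mem_verts_iff, h₂.mem_verts_iff]
  simp only [hadj]

theorem unicyclic_sup_edge {V : Type*} [Finite V] {T : SimpleGraph V} (hT : T.IsTree) {x y : V}
    (hne : x ≠ y) (hxy : ¬ T.Adj x y) : Unicyclic (T ⊔ edge x y) := by
  refine ⟨hT.connected.mono le_sup_left, ?_⟩
  have hnot : ¬ (T ⊔ edge x y).IsAcyclic := by
    rw [isAcyclic_sup_fromEdgeSet_iff]
    have := hT.connected.preconnected x y
    tauto
  simp only [IsAcyclic, not_forall, not_not] at hnot
  obtain ⟨a, c, hc⟩ := hnot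
  refine ⟨c.toSubgraph, hc.isCycleSubgraph, fun H hH => ?_⟩
  refine cycleSubgraph_unique hT.isAcyclic (e := s(x, y)) (fun a b hab he => ?_)
    hH hc.isCycleSubgraph
  rcases hab with h | h
  · exact h
  · simp only [edge_adj] at h
    grind

theorem Unicyclic.cyclesSub_spec {V : Type*} {G : SimpleGraph V} (hG : Unicyclic G) :
    IsCycleSubgraph G (cyclesSub G) ∧ ∀ H, IsCycleSubgraph G H → H = cyclesSub G := by
  obtain ⟨H, hH, hu⟩ := hG.2
  have hset : {H | IsCycleSubgraph G H} = {H} := Set.ext fun K => ⟨hu K, fun h => h ▸ hH⟩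
  have : cyclesSub G = H := by rw [cyclesSub, hset, sSup_singleton]
  rw [this]
  exact ⟨hH, hu⟩

theorem Unicyclic.isTree_deleteEdges {V : Type*} [Finite V] {G : SimpleGraph V}
    (hG : Unicyclic G) {v w : V} (hvw : (cyclesSub G).Adj v w) :
    (G.deleteEdges {s(v, w)}).IsTree := by
  obtain ⟨hC, huniq⟩ := hG.cyclesSub_spec
  have hnot : ¬ G.IsAcyclic := fun h =>
    not_isCycleSubgraph_of_le_acyclic h hC (Subgraph.spanningCoe_le _)
  simp only [IsAcyclic, not_forall, not_not] at hnot
  obtain ⟨a, c, hc⟩ := hnot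
  refine ⟨hG.1.connected_delete_edge_of_not_isBridge fun hb => ?_, fun b d hd => ?_⟩
  · refine hb.notMem_edges_of_isCycle hc ?_
    rw [← Walk.mem_edges_toSubgraph, huniq _ hc.isCycleSubgraph]
    exact hvw
  -- A cycle avoiding `vw` would, viewed in `G`, be a second cycle subgraph.
  · have hle : G.deleteEdges {s(v, w)} ≤ G := deleteEdges_le _
    have hd' : (d.mapLe hle).IsCycle := hd.mapLe hle
    have hmem : s(v, w) ∈ (d.mapLe hle).edges := by
      rw [← Walk.mem_edges_toSubgraph, huniq _ hd'.isCycleSubgraph]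
      exact hvw
    rw [Walk.edges_mapLe_eq_edges] at hmem
    simpa using d.edges_subset_edgeSet hmem

/-- Reattaching a leaf `ℓ` of a tree at another vertex `v` gives a tree. -/
theorem isTree_move_leaf {V : Type*} {T : SimpleGraph V} (hT : T.IsTree) {ℓ u v : V}
    (hleaf : ∀ x, T.Adj ℓ x → x = u) (hv : ℓ ≠ v) :
    (T.deleteEdges {s(ℓ, u)} ⊔ edge ℓ v).IsTree := by
  set D := T.deleteEdges {s(ℓ, u)} with hD
  have hiso : ∀ x, ¬ D.Adj ℓ x := fun x hx => by
    have hx' := (deleteEdges_adj.mp hx)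
    exact hx'.2 (by simp [hleaf x hx'.1])
  have hnr : ∀ x, x ≠ ℓ → ¬ D.Reachable ℓ x := by
    rintro x hx ⟨p⟩
    cases p with
    | nil => exact hx rfl
    | cons h _ => exact hiso _ h
  -- A visit of a walk to `ℓ` is a detour `u ℓ u`, which can be cut out.
  have hr : ∀ x y (p : T.Walk x y), x ≠ ℓ → y ≠ ℓ → D.Reachable x y := by
    intro x y p hx hy
    induction hn : p.length using Nat.strong_induction_on generalizing x with
    | _ n ih =>
      cases p with
      | nil => exact Reachable.refl _
      | @cons _ z _ h q =>
        by_cases hz : z = ℓ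
        · subst hz
          cases q with
          | nil => exact absurd rfl hy
          | @cons _ t _ h' q' =>
            have hxt : x = t := (hleaf x h.symm).trans (hleaf t h').symm
            subst hxt
            exact ih _ (by simp only [Walk.length_cons] at hn; omega) x q' hx rfl
        · have hxz : D.Adj x z := by
            rw [hD, deleteEdges_adj]
            refine ⟨h, ?_⟩
            simp only [Set.mem_singleton_iff, Sym2.eq_iff]
            tauto
          exact hxz.reachable.trans
            (ih _ (by simp only [Walk.length_cons] at hn; omega) z q hz rfl)
  refine ⟨?_, (hT.isAcyclic.anti (deleteEdges_le _)).sup_edge_of_not_reachable (hnr v hv.symm)⟩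
  have hlv : (D ⊔ edge ℓ v).Adj ℓ v := Or.inr (by simp [edge_adj, hv])
  have hreach : ∀ x, (D ⊔ edge ℓ v).Reachable x v := fun x => by
    by_cases hx : x = ℓ
    · rw [hx]; exact hlv.reachable
    · obtain ⟨p⟩ := hT.connected.preconnected x v
      exact (hr x v p hx hv.symm).mono le_sup_left
  have : Nonempty V := ⟨v⟩
  exact ⟨fun x y => (hreach x).trans (hreach y).symm⟩

/-- The choice of the edge `vw`: a vertex off the cycle is nonadjacent to some cycle neighbour of
`v`, since otherwise it would lie on a 4-cycle. -/
theorem Unicyclic.exists_cycle_neighbor_not_adj {V : Type*} {G : SimpleGraph V}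
    (hG : Unicyclic G) {u v : V} (hu : u ∉ (cyclesSub G).verts) (hv : v ∈ (cyclesSub G).verts) :
    ∃ w, (cyclesSub G).Adj v w ∧ ¬ G.Adj u w := by
  obtain ⟨hC, huniq⟩ := hG.cyclesSub_spec
  by_contra! hall
  obtain ⟨w₁, h₁⟩ := hC.mem_verts_iff.mp hv
  obtain ⟨w₂, hne, hN⟩ := hC.exists_pair h₁
  have h₂ : (cyclesSub G).Adj v w₂ := (hN w₂).mpr (Or.inr rfl)
  have huv : u ≠ v := fun h => hu (h ▸ hv)
  have a₁ := hall _ h₁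
  have a₂ := hall _ h₂
  have b₁ := h₁.adj_sub
  have b₂ := h₂.adj_sub
  let c : G.Walk u u := .cons a₁ (.cons b₁.symm (.cons b₂ (.cons a₂.symm .nil)))
  have hc : c.IsCycle := by
    have := a₁.ne
    have := a₂.ne
    have := b₁.ne
    have := b₂.ne
    simp only [c, Walk.cons_isCycle_iff, Walk.cons_isPath_iff, Walk.isPath_iff_nil,
      Walk.support_cons, Walk.support_nil, Walk.edges_cons, Walk.edges_nil, List.mem_cons,
      Sym2.eq_iff, List.not_mem_nil, Walk.nil_nil]
    grind
  apply hu
  rw [← huniq _ hc.isCycleSubgraph, Walk.mem_verts_toSubgraph]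
  exact c.start_mem_support

/-- if ℓ is a leaf of a unicyclic graph U with ℓu ∈ E(U) and u off the cycle,
then for every vertex v of Cycles(U) there is a nontrivial 2-switch τ on U with τ(U)
unicyclic and ℓv ∈ E(τ(U)). -/
theorem stmt5 {V : Type*} [Fintype V] (U : SimpleGraph V) (hU : Unicyclic U)
    (ℓ u : V) (hl : (U.neighborSet ℓ).ncard = 1) (hlu : U.Adj ℓ u)
    (hu : u ∉ (cyclesSub U).verts)
    (v : V) (hv : v ∈ (cyclesSub U).verts) :
    ∃ a b c d : V, IsNontrivialSwitch U a b c d ∧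
      Unicyclic (twoSwitch U a b c d) ∧ (twoSwitch U a b c d).Adj ℓ v := by
  obtain ⟨w, hvw, huw⟩ := hU.exists_cycle_neighbor_not_adj hu hv
  have hC := hU.cyclesSub_spec.1
  have hw : w ∈ (cyclesSub U).verts := (cyclesSub U).edge_vert hvw.symm
  have hleaf : ∀ x, U.Adj ℓ x → x = u := by
    obtain ⟨z, hz⟩ := Set.ncard_eq_one.mp hl
    have hz' : ∀ x, U.Adj ℓ x ↔ x = z := fun x => by simpa using Set.ext_iff.mp hz x
    intro x hx
    rw [(hz' x).mp hx, (hz' u).mp hlu]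
  have hℓ : ℓ ∉ (cyclesSub U).verts := fun h => by
    obtain ⟨y, hy⟩ := hC.mem_verts_iff.mp h
    exact hu (hleaf y hy.adj_sub ▸ (cyclesSub U).edge_vert hy.symm)
  have hℓv : ℓ ≠ v := fun h => hℓ (h ▸ hv)
  have hℓw : ℓ ≠ w := fun h => hℓ (h ▸ hw)
  have huv : u ≠ v := fun h => hu (h ▸ hv)
  have huw' : u ≠ w := fun h => hu (h ▸ hw)
  have hvw' : U.Adj v w := hvw.adj_sub
  have hne := hvw'.ne
  have hℓu := hlu.ne
  have heq : twoSwitch U ℓ u v w =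
      ((U.deleteEdges {s(v, w)}).deleteEdges {s(ℓ, u)} ⊔ edge ℓ v) ⊔ edge u w := by
    rw [twoSwitch, deleteEdges_deleteEdges, sup_assoc, edge, edge, ← fromEdgeSet_union,
      Set.singleton_union, Set.singleton_union, Set.pair_comm s(v, w)]
  refine ⟨ℓ, u, v, w, ⟨?_, hlu, hvw', fun h => huv (hleaf v h).symm, huw⟩, ?_, ?_⟩
  · simp [hℓu, hℓv, hℓw, huv, huw', hne]
  · rw [heq]
    refine unicyclic_sup_edge (isTree_move_leaf (hU.isTree_deleteEdges hvw)
      (fun x hx => hleaf x (deleteEdges_adj.mp hx).1) hℓv) huw' ?_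
    simp only [sup_adj, deleteEdges_adj, edge_adj]
    grind
  · rw [heq]
    exact Or.inl (Or.inr (by simp [edge_adj, hℓv]))
end

section
/- Let U be a unicyclic graph with a vertex ℓ of degree 1 and an edge ℓu ∈ E(U) such that u is not a vertex of Cycles(U). Then for every vertex v with v ∉ V(Cycles(U)), v ≠ u, and deg_U(v) ≥ 2, there exists a nontrivial 2-switch τ on U such that τ(U) is unicyclic and ℓv ∈ E(τ(U)). -/
/-!
The switch is `(ℓ u / v w)` for a suitable neighbour `w` of `v`: it deletes `ℓu`, `vw` and adds
`ℓv`, `uw`. Since `v` lies on no cycle, each edge at `v` is a bridge. As `v` has two neighbours,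
some neighbour `w` is not the second vertex of a chosen path from `v` to `u`; then `u` stays on
the side of `v` when the bridge `vw` is deleted, so `w ≠ u` and `w` is not adjacent to `u`.

The new graph is connected because `uw` again joins the two sides and `ℓ` is attached to `v`.
Cycle subgraphs contain neither leaves nor bridges. Now `ℓ` is a leaf and `vw` a bridge before
the switch, while `ℓ` is a leaf and `uw` a bridge after it, so no cycle subgraph of either graph
uses a switched edge. Both graphs therefore have the same cycle subgraphs
(`existsUnique_cycle_transfer`).
-/

open SimpleGraph

variable {V : Type*}

/-- The edges of a cycle subgraph are not bridges. -/
lemma cycle_edge_reachable {V : Type*} [Finite V] {G : SimpleGraph V} {H : G.Subgraph}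
    (hH : IsCycleSubgraph G H) {x y : V} (hxy : H.Adj x y) :
    (G.deleteEdges {s(x, y)}).Reachable x y := by
  have hc : H.spanningCoe.IsCycles := by
    intro a ha
    obtain ⟨b, hb⟩ := ha
    exact hH.2 a (H.edge_vert hb)
  have h := hc.reachable_deleteEdges (v := x) (w := y) hxy
  exact h.mono (SimpleGraph.deleteEdges_mono H.spanningCoe_le)

/-- Every edge at a vertex lying on no cycle is a bridge. -/
lemma not_reachable_of_off_cycle {V : Type*} [Finite V] {G : SimpleGraph V} {v w : V}
    (hv : v ∉ (cyclesSub G).verts) (hvw : G.Adj v w) :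
    ¬ (G.deleteEdges {s(v, w)}).Reachable v w := by
  intro h
  obtain ⟨x, p, hp, he⟩ := SimpleGraph.adj_and_reachable_delete_edges_iff_exists_cycle.1 ⟨hvw, h⟩
  apply hv
  have hc : IsCycleSubgraph G p.toSubgraph :=
    ⟨p.toSubgraph_connected.coe, fun a ha =>
      hp.ncard_neighborSet_toSubgraph_eq_two (p.mem_verts_toSubgraph.1 ha)⟩
  have hle : p.toSubgraph ≤ cyclesSub G := le_sSup hc
  exact hle.1 (p.mem_verts_toSubgraph.2 (p.fst_mem_support_of_mem_edges he))

/-- A subgraph of `G`, seen as a subgraph of another graph containing its edges. -/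
def moveSubgraph {V : Type*} {G G' : SimpleGraph V} (H : G.Subgraph)
    (h : ∀ x y, H.Adj x y → G'.Adj x y) : G'.Subgraph where
  verts := H.verts
  Adj := H.Adj
  adj_sub := fun {a b} hab => h a b hab
  edge_vert := H.edge_vert
  symm := H.symm

/-- If all cycle subgraphs of each of two graphs live in the other graph, the graphs have the
same cycle subgraphs; in particular uniqueness passes from one to the other. -/
lemma existsUnique_cycle_transfer {V : Type*} {G G' : SimpleGraph V}
    (h : ∀ H, IsCycleSubgraph G H → ∀ x y, H.Adj x y → G'.Adj x y)
    (h' : ∀ H, IsCycleSubgraph G' H → ∀ x y, H.Adj x y → G.Adj x y)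
    (hG : ∃! H : G.Subgraph, IsCycleSubgraph G H) :
    ∃! H : G'.Subgraph, IsCycleSubgraph G' H := by
  obtain ⟨H, hH, huniq⟩ := hG
  refine ⟨moveSubgraph H (h H hH), hH, fun K hK => ?_⟩
  have hK' := huniq (moveSubgraph K (h' K hK)) hK
  subst hK'
  rfl

/-- Reachability passes to a graph in which the endpoints of every edge are reachable. -/
lemma reachable_of_adj_reachable {V : Type*} {G G' : SimpleGraph V}
    (h : ∀ x y, G.Adj x y → G'.Reachable x y) {x y : V} (hxy : G.Reachable x y) :
    G'.Reachable x y := by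
  obtain ⟨p⟩ := hxy
  induction p with
  | nil => exact .refl _
  | cons hab _ ih => exact (h _ _ hab).trans ih

lemma twoSwitch_adj {V : Type*} (G : SimpleGraph V) (a b c d x y : V) :
    (twoSwitch G a b c d).Adj x y ↔
      (G.Adj x y ∧ s(x, y) ≠ s(a, b) ∧ s(x, y) ≠ s(c, d)) ∨
      ((s(x, y) = s(a, c) ∨ s(x, y) = s(b, d)) ∧ x ≠ y) := by
  simp [twoSwitch, SimpleGraph.deleteEdges_adj]

/-- A vertex with at most one neighbour lies on no cycle subgraph. -/
lemma cycle_not_adj_leaf {V : Type*} [Finite V] {G : SimpleGraph V} {H : G.Subgraph}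
    (hH : IsCycleSubgraph G H) {x z : V} (hx : ∀ y, G.Adj x y → y = z) (y : V) :
    ¬ H.Adj x y := by
  intro hxy
  have h2 := hH.2 x (H.edge_vert hxy)
  have hs : H.neighborSet x ⊆ {z} := fun a ha => hx a (H.adj_sub ha)
  have := Set.ncard_le_ncard hs
  rw [h2, Set.ncard_singleton] at this
  omega

/-- Some neighbour `w` of `v` is such that `v` still reaches `u` without the edge `vw`: any
neighbour other than the second vertex of a path from `v` to `u`. -/
lemma exists_neighbor_avoiding {V : Type*} [Finite V] {G : SimpleGraph V} {v u : V}
    (hG : G.Connected) (hvu : v ≠ u) (hdv : 2 ≤ (G.neighborSet v).ncard) :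
    ∃ w, G.Adj v w ∧ (G.deleteEdges {s(v, w)}).Reachable v u := by
  obtain ⟨p, hp⟩ := (hG v u).exists_isPath
  cases p with
  | nil => exact absurd rfl hvu
  | @cons _ x _ hvx q =>
    obtain ⟨w, hw, hwx⟩ := Set.exists_ne_of_one_lt_ncard hdv x
    refine ⟨w, hw, ⟨(SimpleGraph.Walk.cons hvx q).toDeleteEdges {s(v, w)} ?_⟩⟩
    rintro e he rfl
    rw [SimpleGraph.Walk.cons_isPath_iff] at hp
    rw [SimpleGraph.Walk.edges_cons, List.mem_cons] at he
    rcases he with he | he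
    · exact hwx (by grind)
    · exact hp.2 (q.fst_mem_support_of_mem_edges he)

/-- if ℓ is a leaf of a unicyclic graph U with ℓu ∈ E(U) and u off the cycle,
then for every vertex v off the cycle with v ≠ u and deg(v) ≥ 2 there is a nontrivial
2-switch τ on U with τ(U) unicyclic and ℓv ∈ E(τ(U)). -/
theorem stmt6 {V : Type*} [Fintype V] (U : SimpleGraph V) (hU : Unicyclic U)
    (ℓ u : V) (hl : (U.neighborSet ℓ).ncard = 1) (hlu : U.Adj ℓ u)
    (hu : u ∉ (cyclesSub U).verts)
    (v : V) (hv : v ∉ (cyclesSub U).verts) (hvu : v ≠ u)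
    (hdv : 2 ≤ (U.neighborSet v).ncard) :
    ∃ a b c d : V, IsNontrivialSwitch U a b c d ∧
      Unicyclic (twoSwitch U a b c d) ∧ (twoSwitch U a b c d).Adj ℓ v := by
  obtain ⟨w, hvw, hr⟩ := exists_neighbor_avoiding hU.1 hvu hdv
  have hbr := not_reachable_of_off_cycle hv hvw
  have hleaf : ∀ y, U.Adj ℓ y → y = u := by
    obtain ⟨z, hz⟩ := Set.ncard_eq_one.1 hl
    have hz' : ∀ y, U.Adj ℓ y → y = z := fun y hy => by
      have : y ∈ U.neighborSet ℓ := hy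
      simpa [hz] using this
    intro y hy
    rw [hz' y hy, hz' u hlu]
  have hlv : ℓ ≠ v := by
    rintro rfl
    omega
  have hwu : w ≠ u := by
    rintro rfl
    exact hbr hr
  have hlw : ℓ ≠ w := by
    rintro rfl
    exact hvu (hleaf v hvw.symm)
  have hnlv : ¬ U.Adj ℓ v := fun h => hvu (hleaf v h)
  have hnuw : ¬ U.Adj u w := by
    intro h
    refine hbr (hr.trans (SimpleGraph.Adj.reachable ?_))
    rw [SimpleGraph.deleteEdges_adj]
    exact ⟨h, by grind⟩
  have hluw := hlu.ne
  have hvwne := hvw.ne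
  have hadj := twoSwitch_adj U ℓ u v w
  set G' := twoSwitch U ℓ u v w with hG'
  have hleaf' : ∀ y, G'.Adj ℓ y → y = v := by
    intro y hy
    rcases (hadj ℓ y).1 hy with ⟨h1, h2, -⟩ | ⟨h1, -⟩
    · exact absurd (by rw [hleaf y h1]) h2
    · grind
  have hG'lv : G'.Adj ℓ v := (hadj _ _).2 (Or.inr ⟨Or.inl rfl, hlv⟩)
  have hG'uw : G'.Adj u w := (hadj _ _).2 (Or.inr ⟨Or.inr rfl, hwu.symm⟩)
  -- A walk to `u` in `U - vw` starting off `ℓ` can enter `ℓ` only from `u` itself.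
  have hvu' : G'.Reachable v u := by
    have key : ∀ x y, (U.deleteEdges {s(v, w)}).Walk x y → y = u → x ≠ ℓ →
        G'.Reachable x y := by
      intro x y p
      induction p with
      | nil => intros; exact .refl _
      | @cons a b c hab _ ih =>
        intro hc ha
        rw [SimpleGraph.deleteEdges_adj] at hab
        by_cases hb : b = ℓ
        · subst hb
          rw [hleaf a hab.1.symm, hc]
        · refine SimpleGraph.Reachable.trans (SimpleGraph.Adj.reachable ?_) (ih hc hb)
          exact (hadj a b).2 (Or.inl ⟨hab.1, by grind, hab.2⟩)
    obtain ⟨p⟩ := hr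
    exact key v u p rfl hlv.symm
  have hconn : G'.Connected := by
    have hne := hU.1.nonempty
    refine ⟨fun x y => reachable_of_adj_reachable ?_ (hU.1 x y)⟩
    intro a b hab
    by_cases h1 : s(a, b) = s(ℓ, u)
    · have := hG'lv.reachable.trans hvu'
      rcases Sym2.eq_iff.1 h1 with ⟨rfl, rfl⟩ | ⟨rfl, rfl⟩
      · exact this
      · exact this.symm
    · by_cases h2 : s(a, b) = s(v, w)
      · have := hvu'.trans hG'uw.reachable
        rcases Sym2.eq_iff.1 h2 with ⟨rfl, rfl⟩ | ⟨rfl, rfl⟩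
        · exact this
        · exact this.symm
      · exact ((hadj a b).2 (Or.inl ⟨hab, h1, h2⟩)).reachable
  -- Adding `ℓv` to `U - vw` joins no new vertices, so `uw` is a bridge of the new graph.
  have hbr' : ¬ (G'.deleteEdges {s(u, w)}).Reachable u w := by
    intro h
    refine hbr (hr.trans (reachable_of_adj_reachable ?_ h))
    intro a b hab
    rw [SimpleGraph.deleteEdges_adj] at hab
    have hul : (U.deleteEdges {s(v, w)}).Reachable u ℓ := by
      apply SimpleGraph.Adj.reachable
      rw [SimpleGraph.deleteEdges_adj]
      exact ⟨hlu.symm, by grind⟩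
    rcases (hadj a b).1 hab.1 with ⟨h1, -, h2⟩ | ⟨h1 | h1, -⟩
    · apply SimpleGraph.Adj.reachable
      rw [SimpleGraph.deleteEdges_adj]
      exact ⟨h1, h2⟩
    · rcases Sym2.eq_iff.1 h1 with ⟨rfl, rfl⟩ | ⟨rfl, rfl⟩
      · exact (hr.trans hul).symm
      · exact hr.trans hul
    · exact absurd h1 hab.2
  refine ⟨ℓ, u, v, w, ⟨by grind, hlu, hvw, hnlv, hnuw⟩,
    ⟨hconn, existsUnique_cycle_transfer ?_ ?_ hU.2⟩, hG'lv⟩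
  · intro H hH x y hxy
    refine (hadj x y).2 (Or.inl ⟨H.adj_sub hxy, fun h => ?_, fun h => ?_⟩)
    · have : H.Adj ℓ u := by rwa [← SimpleGraph.Subgraph.mem_edgeSet, ← h]
      exact cycle_not_adj_leaf hH hleaf u this
    · have : H.Adj v w := by rwa [← SimpleGraph.Subgraph.mem_edgeSet, ← h]
      exact hbr (cycle_edge_reachable hH this)
  · intro H hH x y hxy
    rcases (hadj x y).1 (H.adj_sub hxy) with h1 | ⟨h | h, -⟩
    · exact h1.1
    · have : H.Adj ℓ v := by rwa [← SimpleGraph.Subgraph.mem_edgeSet, ← h]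
      exact absurd this (cycle_not_adj_leaf hH hleaf' v)
    · have : H.Adj u w := by rwa [← SimpleGraph.Subgraph.mem_edgeSet, ← h]
      exact absurd (cycle_edge_reachable hH this) hbr'
end

section
/- Let C and C' be two cycle graphs on the same vertex set of n ≥ 3 vertices (i.e., each is connected and 2-regular on this vertex set). Then there exists a finite sequence of graphs C = G_0, G_1, …, G_k = C' such that each G_{i+1} is obtained from G_i by a nontrivial 2-switch and every G_i is unicyclic. -/
/-!
The intermediate graphs can all be taken to be cycle graphs. A cycle graph on `N ≥ 4` vertices is
the same as a cyclic labelling `e : V ≃ Fin N`, two vertices being adjacent when their labels are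
consecutive modulo `N` (`exists_eq_labelCycle`). If `a, b, c, d` are four consecutive vertices of
such a cycle, the 2-switch `(a b / c d)` replaces the path `a b c d` by `a c b d`, that is, it
exchanges the labels of `b` and `c` (`switchStep_labelCycle`). Transpositions of consecutive labels
generate the symmetric group on `Fin N`, so any labelling can be turned into any other one. On three
vertices there is only one cycle graph, the complete graph. A cycle graph is unicyclic since a
2-regular subgraph is closed under adjacency, and so is the whole graph by connectedness
(`IsCycleGraph.unicyclic`).
-/

open SimpleGraph

variable {V : Type*}

/-- The cycle graph given by a cyclic labelling of the vertices. -/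
def labelCycle {V : Type*} {m : ℕ} (e : V ≃ Fin (m + 4)) : SimpleGraph V where
  Adj v w := e w = e v + 1 ∨ e v = e w + 1
  symm := ⟨fun _ _ h => h.symm⟩
  loopless := ⟨fun v h => by
    have h1 : e v = e v + 1 := by tauto
    simp at h1⟩

/-- A cycle subgraph of a cycle graph already contains both edges at each of its vertices. -/
theorem IsCycleGraph.unicyclic {V : Type*} [Finite V] {G : SimpleGraph V} (hG : IsCycleGraph G) :
    Unicyclic G := by
  obtain ⟨hconn, hreg⟩ := hG
  refine ⟨hconn, ⊤, ⟨?_, fun v _ => by simpa using hreg v⟩, ?_⟩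
  · exact (Subgraph.topIso.connected_iff).2 hconn
  rintro H ⟨hH, hHreg⟩
  have key : ∀ v ∈ H.verts, ∀ w, G.Adj v w → H.Adj v w := by
    intro v hv w hvw
    have h := Set.eq_of_subset_of_ncard_le (H.neighborSet_subset v)
      (by rw [hHreg v hv, hreg v]) (Set.toFinite _)
    have hw : w ∈ G.neighborSet v := hvw
    rw [← h] at hw
    exact hw
  have hverts : ∀ v, v ∈ H.verts := by
    obtain ⟨⟨u, hu⟩⟩ := hH.nonempty
    intro v
    obtain ⟨p⟩ := hconn.preconnected u v
    induction p with
    | nil => exact hu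
    | cons h p ih => exact ih (H.edge_vert (key _ hu _ h).symm)
  ext v w
  · simp [hverts v]
  · exact ⟨fun h => H.adj_sub h, fun h => key v (hverts v) w h⟩

theorem isCycleGraph_labelCycle {V : Type*} {m : ℕ} (e : V ≃ Fin (m + 4)) :
    IsCycleGraph (labelCycle e) := by
  refine ⟨?_, fun v => ?_⟩
  · have h0 : ∀ i : Fin (m + 4), (labelCycle e).Reachable (e.symm 0) (e.symm i) := by
      intro i
      induction i using Fin.induction with
      | zero => exact Reachable.refl _
      | succ i ih =>
        refine ih.trans (Adj.reachable (Or.inl ?_))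
        simp
    have : Nonempty V := ⟨e.symm 0⟩
    refine ⟨fun v w => ?_⟩
    have hv := h0 (e v)
    have hw := h0 (e w)
    rw [e.symm_apply_apply] at hv hw
    exact hv.symm.trans hw
  · have h : (labelCycle e).neighborSet v = {e.symm (e v + 1), e.symm (e v - 1)} := by
      ext w
      simp only [mem_neighborSet, labelCycle, Set.mem_insert_iff, Set.mem_singleton_iff,
        Equiv.eq_symm_apply]
      rw [eq_sub_iff_add_eq, eq_comm (a := e v)]
    rw [h, Set.ncard_pair]
    rw [Ne, e.symm.injective.eq_iff, eq_sub_iff_add_eq, add_assoc, add_eq_left]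
    intro h2
    have := congrArg Fin.val h2
    simp only [Fin.val_add, Fin.val_one, Fin.val_zero] at this
    rw [Nat.mod_eq_of_lt (by omega)] at this
    omega

theorem exists_eq_labelCycle {V : Type*} [Fintype V] {m : ℕ} (hcard : Fintype.card V = m + 4)
    {G : SimpleGraph V} (hG : IsCycleGraph G) : ∃ e : V ≃ Fin (m + 4), G = labelCycle e := by
  obtain ⟨hconn, hreg⟩ := hG
  obtain ⟨u⟩ := hconn.nonempty
  have hcyc : G.IsCycles := fun v _ => hreg v
  obtain ⟨p, hp, hverts⟩ := hcyc.exists_cycle_toSubgraph_verts_eq_connectedComponentSupp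
    (v := u) (c := G.connectedComponentMk u) rfl
    (Set.nonempty_of_ncard_ne_zero (by rw [hreg u]; decide))
  have hl := hp.three_le_length
  have hbij : Function.Bijective (fun i : Fin p.length => p.getVert i) := by
    constructor
    · intro i j hij
      refine Fin.ext (hp.getVert_injOn' ?_ ?_ hij) <;> simp only [Set.mem_ofPred_eq] <;> omega
    · intro v
      have hv : v ∈ p.toSubgraph.verts := by
        rw [hverts, ConnectedComponent.mem_supp_iff, ConnectedComponent.eq]
        exact hconn.preconnected v u
      rw [Walk.mem_verts_toSubgraph, Walk.mem_support_iff_exists_getVert] at hv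
      obtain ⟨n, hn, hle⟩ := hv
      rcases hle.lt_or_eq with h | h
      · exact ⟨⟨n, h⟩, hn⟩
      · -- the closed walk returns to its starting vertex at time `p.length`
        refine ⟨⟨0, by omega⟩, ?_⟩
        rw [h, Walk.getVert_length] at hn
        simpa using hn
  have hlen : p.length = m + 4 := by
    rw [← hcard, ← Fintype.card_of_bijective hbij, Fintype.card_fin]
  let σ : Fin (m + 4) ≃ V := (finCongr hlen.symm).trans (Equiv.ofBijective _ hbij)
  have hσ : ∀ i : Fin (m + 4), σ i = p.getVert i := fun i => rfl
  have hadj : ∀ i : Fin (m + 4), G.Adj (σ i) (σ (i + 1)) := by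
    intro i
    have h := p.adj_getVert_succ (i := i) (by omega)
    rw [hσ, hσ]
    rcases Nat.lt_or_ge (i.val + 1) (m + 4) with hi | hi
    · rwa [Fin.val_add_one_of_lt' hi]
    · have hi' : i = Fin.last (m + 3) := Fin.ext (by simp; omega)
      subst hi'
      have h2 : p.getVert (m + 4) = p.getVert 0 := by
        rw [← hlen, Walk.getVert_length, Walk.getVert_zero]
      simpa [h2] using h
  refine ⟨σ.symm, ?_⟩
  have hle : labelCycle σ.symm ≤ G := by
    have h1 : ∀ v w, σ.symm w = σ.symm v + 1 → G.Adj v w := by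
      intro v w h
      have := hadj (σ.symm v)
      rwa [← h, σ.apply_symm_apply, σ.apply_symm_apply] at this
    rintro v w (h | h)
    · exact h1 v w h
    · exact (h1 w v h).symm
  refine le_antisymm (fun v w hvw => ?_) hle
  -- both graphs are 2-regular, so the inclusion of neighbourhoods is an equality
  have h := Set.eq_of_subset_of_ncard_le (s := (labelCycle σ.symm).neighborSet v)
    (t := G.neighborSet v) (fun w hw => hle hw)
    (by rw [hreg v, (isCycleGraph_labelCycle σ.symm).2 v]) (Set.toFinite _)
  have hw : w ∈ G.neighborSet v := hvw
  rw [← h] at hw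
  exact hw

/-- Exchanging two consecutive labels of a cycle is a nontrivial 2-switch. -/
theorem switchStep_labelCycle {V : Type*} {m : ℕ} (e : V ≃ Fin (m + 4)) (i : Fin (m + 4)) :
    SwitchStep (labelCycle e) (labelCycle (e.trans (Equiv.swap i (i + 1)))) := by
  classical
  obtain ⟨a, ha⟩ := e.surjective (i - 1)
  obtain ⟨b, hb⟩ := e.surjective i
  obtain ⟨c, hc⟩ := e.surjective (i + 1)
  obtain ⟨d, hd⟩ := e.surjective (i + 2)
  have hone : ∀ k : ℕ, 0 < k → k < 4 → ∀ x : Fin (m + 4), x + Fin.ofNat (m + 4) k ≠ x := by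
    intro k hk hk4 x hx
    rw [add_eq_left] at hx
    have := congrArg Fin.val hx
    simp only [Fin.val_ofNat, Fin.val_zero] at this
    rw [Nat.mod_eq_of_lt (by omega)] at this
    omega
  have hinj : ∀ x y : Fin (m + 4), x + 1 = y + 1 → x = y := fun x y h => add_right_cancel h
  have hab : e a + 1 = e b := by rw [ha, hb, sub_add_cancel]
  have hbc : e b + 1 = e c := by rw [hb, hc]
  have hcd : e c + 1 = e d := by
    rw [hc, hd, add_assoc]; rfl
  have n1 : ∀ x : Fin (m + 4), x + 1 ≠ x := hone 1 (by omega) (by omega)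
  have n2 : ∀ x : Fin (m + 4), x + 1 + 1 ≠ x := fun x => by
    rw [add_assoc]; exact hone 2 (by omega) (by omega) x
  have n3 : ∀ x : Fin (m + 4), x + 1 + 1 + 1 ≠ x := fun x => by
    rw [add_assoc, add_assoc]; exact hone 3 (by omega) (by omega) x
  have dab : a ≠ b := by rintro rfl; exact n1 _ hab
  have dbc : b ≠ c := by rintro rfl; exact n1 _ hbc
  have dcd : c ≠ d := by rintro rfl; exact n1 _ hcd
  have dac : a ≠ c := by rintro rfl; exact n2 (e a) (by rw [hab, hbc])
  have dbd : b ≠ d := by rintro rfl; exact n2 (e b) (by rw [hbc, hcd])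
  have dad : a ≠ d := by rintro rfl; exact n3 (e a) (by rw [hab, hbc, hcd])
  have hswap : ∀ v, (e.trans (Equiv.swap i (i + 1))) v =
      if v = b then e c else if v = c then e b else e v := by
    intro v
    rw [Equiv.trans_apply, Equiv.swap_apply_def, ← hb, hbc]
    simp only [e.injective.eq_iff]
  have einj := e.injective
  refine ⟨a, b, c, d, ⟨by simp; tauto, Or.inl hab.symm, Or.inl hcd.symm, ?_, ?_⟩, ?_⟩
  · rintro (h | h) <;> grind
  · rintro (h | h) <;> grind
  · have hinj' : ∀ x y : V, e x + 1 = e y + 1 → x = y := fun x y h => e.injective (hinj _ _ h)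
    ext v w
    simp only [labelCycle, twoSwitch, hswap, sup_adj, deleteEdges_adj, fromEdgeSet_adj,
      Set.mem_insert_iff, Set.mem_singleton_iff, Sym2.eq_iff]
    have einj' : ∀ x y : V, e x = e y → x = y := fun x y h => e.injective h
    clear hone n1 n2 n3 hswap ha hb hc hd einj hinj
    by_cases hva : v = a <;> by_cases hvb : v = b <;> by_cases hvc : v = c <;>
      by_cases hvd : v = d <;> by_cases hwa : w = a <;> by_cases hwb : w = b <;>
      by_cases hwc : w = c <;> by_cases hwd : w = d <;> grind

/-- any two cycle graphs on the same vertex set of n ≥ 3 vertices are related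
by a finite sequence of nontrivial 2-switches all of whose intermediate graphs are
unicyclic. -/
theorem stmt10 {V : Type*} [Fintype V] (hcard : 3 ≤ Fintype.card V)
    (C C' : SimpleGraph V) (hC : IsCycleGraph C) (hC' : IsCycleGraph C') :
    Relation.ReflTransGen (fun X Y : SimpleGraph V => SwitchStep X Y ∧ Unicyclic Y) C C' := by
  rcases hcard.eq_or_lt with h3 | h4
  · -- on three vertices a 2-regular graph is complete
    have htop : ∀ G : SimpleGraph V, IsCycleGraph G → G = ⊤ := by
      intro G hG
      refine top_unique fun v w hvw => ?_
      have h := Set.eq_of_subset_of_ncard_le (s := G.neighborSet v) (t := {v}ᶜ)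
        (fun w hw => (G.ne_of_adj hw).symm)
        (by
          rw [hG.2 v, Set.ncard_compl, Set.ncard_singleton, Nat.card_eq_fintype_card]
          omega) (Set.toFinite _)
      have hw : w ∈ ({v}ᶜ : Set V) := fun h => hvw h.symm
      rw [← h] at hw
      exact hw
    rw [htop C hC, htop C' hC']
  · obtain ⟨m, hm⟩ : ∃ m, Fintype.card V = m + 4 := ⟨Fintype.card V - 4, by omega⟩
    obtain ⟨e, rfl⟩ := exists_eq_labelCycle hm hC
    obtain ⟨e', rfl⟩ := exists_eq_labelCycle hm hC'
    have key : ∀ τ : Equiv.Perm (Fin (m + 4)), ∀ e : V ≃ Fin (m + 4),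
        Relation.ReflTransGen (fun X Y : SimpleGraph V => SwitchStep X Y ∧ Unicyclic Y)
          (labelCycle e) (labelCycle (e.trans τ)) := by
      intro τ
      have hτ : τ ∈ Submonoid.closure
          (Set.range fun i : Fin (m + 3) => Equiv.swap i.castSucc i.succ) := by
        rw [Equiv.Perm.mclosure_swap_castSucc_succ]
        trivial
      induction hτ using Submonoid.closure_induction with
      | mem x hx =>
        obtain ⟨i, rfl⟩ := hx
        intro e
        have h := switchStep_labelCycle e i.castSucc
        rw [Fin.coeSucc_eq_succ] at h
        exact Relation.ReflTransGen.single ⟨h, (isCycleGraph_labelCycle _).unicyclic⟩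
      | one =>
        intro e
        exact Relation.ReflTransGen.refl
      | mul x y _ _ hx hy =>
        intro e
        exact (hy e).trans (hx (e.trans y))
    have h := key (e.symm.trans e') e
    rwa [← Equiv.trans_assoc, Equiv.self_trans_symm, Equiv.refl_trans] at h
end
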